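/- Fix q ∈ ℝ with 0 < q < 1, n ∈ ℕ, and nonzero z, δ ∈ ℂ with z ∉ {1, q, q², …, q^{n−1}}. Then (−δz)^{−n} q^{n(n−1)/2} ∑_{k=0}^n [(q^{−n};q)_k (1/(zδ);q)_k (1/z;q)_k / (q;q)_k] q^{−k(k−1)} (δz²qⁿ)^k = zⁿ (1/z;q)_n ∑_{j=0}^n [(q^{−n};q)_j / ((zq^{1−n};q)_j (q;q)_j)] (−1)^j q^{j(j−1)/2} (q/δ)^j. (This is the connection between a terminating ₃φ₀ and a terminating ₁φ₁: (−δz)^{−n} q^{n(n−1)/2} ₃φ₀(q^{−n}, 1/(zδ), 1/z; —; q, δz²qⁿ) = zⁿ (1/z;q)_n ₁φ₁(q^{−n}; zq^{1−n}; q, q/δ).) -/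

import Mathlib

/-!
Write `P_k(y) = ∏_{i<k} (y - q^i)`, `t_k = q^{k(k-1)/2}` and `[n,k]` for the Gaussian binomial
coefficient. Clearing the `q`-shifted factorials (`qp_neg`, `qp_inv`, `qp_shift`) turns the claim,
with `x = z δ`, into the polynomial identity

`(-1)^n t_n ∑_k (-1)^k [n,k] t_k⁻¹ P_k(x) P_k(z) = ∑_j (-1)^j [n,j] t_j z^j x^{n-j} P_{n-j}(z)`.

Both sides satisfy the recurrence `F_{n+1}(z) = q^n (x (z-1) F_n(z/q) - z F_n(z))` with `F_0 = 1`: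
this follows from one of the two `q`-Pascal rules for each side, together with
`P_{k+1}(z) = (z-1) q^k P_k(z/q)`. Hence they agree by induction on `n`.
-/

open Filter

noncomputable def qp (q a : ℂ) (n : ℕ) : ℂ := ∏ j ∈ Finset.range n, (1 - a * q ^ j)
noncomputable def qpInf (q a : ℂ) : ℂ := ∏' j : ℕ, (1 - a * q ^ j)
noncomputable def phi32 (q a b c d e w : ℂ) : ℂ :=
  ∑' k : ℕ, (qp q a k * qp q b k * qp q c k) / (qp q d k * qp q e k * qp q q k) * w ^ k
noncomputable def phi21 (q a b c w : ℂ) : ℂ :=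
  ∑' k : ℕ, (qp q a k * qp q b k) / (qp q c k * qp q q k) * w ^ k
noncomputable def phi11 (q a b w : ℂ) : ℂ :=
  ∑' k : ℕ, qp q a k / (qp q b k * qp q q k) * (-1) ^ k * q ^ (k * (k - 1) / 2) * w ^ k

noncomputable def Prec {K : Type*} [Field K] (a b2 : ℕ → K) (z : K) : ℕ → K
  | 0 => 1
  | 1 => z - a 0
  | n + 2 => (z - a (n + 1)) * Prec a b2 z (n + 1) - b2 (n + 1) * Prec a b2 z n

noncomputable def aCDH (q A B C D : ℂ) (n : ℕ) : ℂ :=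
  (1 / A + 1 / B + 1 / C + 1 / D) * q ^ (n : ℤ) - (1 + q) * q ^ (2 * (n : ℤ) - 1)

noncomputable def bCDH (q A B C D : ℂ) (n : ℕ) : ℂ :=
  q / (A * B * C * D) * (1 - A * q ^ ((n : ℤ) - 1)) * (1 - B * q ^ ((n : ℤ) - 1)) *
    (1 - C * q ^ ((n : ℤ) - 1)) * (1 - D * q ^ ((n : ℤ) - 1))

/-- `X` solves the associated continuous dual `q`-Hahn recurrence
`X_{n+1} - (z - a_n) X_n + b_n² X_{n-1} = 0` for `n ≥ 1`. -/
def SolvesCDH (q A B C D z : ℂ) (X : ℕ → ℂ) : Prop :=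
  ∀ n : ℕ, 1 ≤ n →
    X (n + 1) - (z - aCDH q A B C D n) * X n + bCDH q A B C D n * X (n - 1) = 0

/-- The Gaussian binomial coefficient `[n,k]_q`, defined by the `q`-Pascal rule; it vanishes
for `k > n`. -/
noncomputable def gb (q : ℂ) : ℕ → ℕ → ℂ
  | _, 0 => 1
  | 0, _ + 1 => 0
  | n + 1, k + 1 => gb q n k + q ^ (k + 1) * gb q n (k + 1)

/-- The polynomial `P_k(y) = ∏_{i<k} (y - q^i)`, equal to `y^k (1/y;q)_k` for `y ≠ 0`. -/
noncomputable def shP (q y : ℂ) (k : ℕ) : ℂ := ∏ i ∈ Finset.range k, (y - q ^ i)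

/-- The triangular power `q^{k(k-1)/2}`. -/
noncomputable def tri (q : ℂ) (k : ℕ) : ℂ := q ^ (k * (k - 1) / 2)

lemma tri_zero (q : ℂ) : tri q 0 = 1 := by simp [tri]

lemma tri_succ (q : ℂ) (k : ℕ) : tri q (k + 1) = tri q k * q ^ k := by
  rw [tri, tri, Nat.triangle_succ, pow_add]

lemma tri_ne {q : ℂ} (hq : q ≠ 0) (k : ℕ) : tri q k ≠ 0 := pow_ne_zero _ hq

lemma gb_zero (q : ℂ) (n : ℕ) : gb q n 0 = 1 := by cases n <;> rfl

lemma gb_succ (q : ℂ) (n k : ℕ) :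
    gb q (n + 1) (k + 1) = gb q n k + q ^ (k + 1) * gb q n (k + 1) := rfl

lemma gb_eq_zero (q : ℂ) : ∀ n k : ℕ, n < k → gb q n k = 0
  | _, 0, h => by omega
  | 0, _ + 1, _ => rfl
  | n + 1, k + 1, h => by
    rw [gb_succ, gb_eq_zero q n k (by omega), gb_eq_zero q n (k + 1) (by omega)]; ring

/-- The ratio `[n,k+1]/[n,k] = (1 - q^{n-k})/(1 - q^{k+1})`, cleared of denominators so that it
holds for all `n` and `k`. -/
lemma gb_ratio (q : ℂ) (n : ℕ) : ∀ k : ℕ,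
    gb q n (k + 1) * q ^ k * (1 - q ^ (k + 1)) = gb q n k * (q ^ k - q ^ n) := by
  induction n with
  | zero =>
    intro k
    cases k with
    | zero => simp [gb]
    | succ k => simp [gb]
  | succ n ih =>
    intro k
    cases k with
    | zero =>
      have h := ih 0
      simp only [gb_succ, gb_zero] at h ⊢
      linear_combination q * h
    | succ k =>
      have h1 := ih k
      have h2 := ih (k + 1)
      rw [gb_succ, gb_succ]
      linear_combination q ^ (k + 2) * h2 + q * h1

/-- The second `q`-Pascal rule. -/
lemma gb_succ' {q : ℂ} (hq : q ≠ 0) (n k : ℕ) (hk : k ≤ n) :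
    gb q (n + 1) (k + 1) = q ^ (n - k) * gb q n k + gb q n (k + 1) := by
  have h := gb_ratio q n k
  have hn : q ^ n = q ^ (n - k) * q ^ k := by rw [← pow_add]; congr 1; omega
  apply mul_left_cancel₀ (pow_ne_zero k hq)
  rw [gb_succ]
  rw [hn] at h
  linear_combination -h

lemma shP_succ (q y : ℂ) (k : ℕ) : shP q y (k + 1) = shP q y k * (y - q ^ k) :=
  Finset.prod_range_succ _ _

lemma shP_zero (q y : ℂ) : shP q y 0 = 1 := by simp [shP]

lemma shP_succ' {q : ℂ} (hq : q ≠ 0) (y : ℂ) (k : ℕ) :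
    shP q y (k + 1) = (y - 1) * q ^ k * shP q (y / q) k := by
  induction k with
  | zero => simp [shP]
  | succ k ih =>
    rw [shP_succ, ih, shP_succ]
    field_simp
    ring

/-- The polynomial form of the terminating `₃φ₀`. -/
noncomputable def sumL (q x z : ℂ) (n : ℕ) : ℂ :=
  (-1) ^ n * tri q n *
    ∑ k ∈ Finset.range (n + 1), (-1) ^ k * gb q n k * (tri q k)⁻¹ * shP q x k * shP q z k

/-- The polynomial form of the terminating `₁φ₁`. -/
noncomputable def sumR (q x z : ℂ) (n : ℕ) : ℂ :=
  ∑ j ∈ Finset.range (n + 1),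
    gb q n j * (-1) ^ j * tri q j * z ^ j * x ^ (n - j) * shP q z (n - j)

lemma sumL_succ {q : ℂ} (hq : q ≠ 0) (x z : ℂ) (n : ℕ) :
    sumL q x z (n + 1) = q ^ n * (x * (z - 1) * sumL q x (z / q) n - z * sumL q x z n) := by
  -- The first `q`-Pascal rule splits the sum; the second part is reindexed to start at `0`.
  have key : ∑ k ∈ Finset.range (n + 1 + 1),
        (-1) ^ k * gb q (n + 1) k * (tri q k)⁻¹ * shP q x k * shP q z k
      = ∑ k ∈ Finset.range (n + 1),
          (-1) ^ (k + 1) * gb q n k * (tri q (k + 1))⁻¹ * shP q x (k + 1) * shP q z (k + 1)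
        + ∑ k ∈ Finset.range (n + 1),
          (-1) ^ k * (q ^ k * gb q n k) * (tri q k)⁻¹ * shP q x k * shP q z k := by
    have h2 := Finset.sum_range_succ'
      (fun k => (-1) ^ k * (q ^ k * gb q n k) * (tri q k)⁻¹ * shP q x k * shP q z k) (n + 1)
    rw [Finset.sum_range_succ] at h2
    rw [gb_eq_zero q n (n + 1) (by omega)] at h2
    simp only [mul_zero, zero_mul, add_zero] at h2
    rw [h2, Finset.sum_range_succ', ← add_assoc, ← Finset.sum_add_distrib]
    congr 1
    · apply Finset.sum_congr rfl
      intro k _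
      rw [gb_succ]; ring
    · simp [gb_zero]
  unfold sumL
  rw [key, tri_succ, ← Finset.sum_add_distrib]
  simp only [Finset.mul_sum]
  rw [← Finset.sum_sub_distrib, Finset.mul_sum]
  apply Finset.sum_congr rfl
  intro k _
  have h1 := shP_succ' hq z k
  have h2 := shP_succ q z k
  have hk := pow_ne_zero k hq
  have ht := tri_ne hq k
  have h3 : (z - 1) * shP q (z / q) k = (q ^ k)⁻¹ * (shP q z k * (z - q ^ k)) := by
    rw [← h2, h1]; field_simp
  rw [tri_succ, shP_succ q x, shP_succ q z]
  have h4 : ∀ c : ℂ, x * (z - 1) * (c * shP q (z / q) k)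
      = x * c * ((q ^ k)⁻¹ * (shP q z k * (z - q ^ k))) := by
    intro c; rw [← h3]; ring
  have h5 : x * (z - 1) * ((-1) ^ n * tri q n *
        ((-1) ^ k * gb q n k * (tri q k)⁻¹ * shP q x k * shP q (z / q) k))
      = x * ((-1) ^ n * tri q n * ((-1) ^ k * gb q n k * (tri q k)⁻¹ * shP q x k)) *
        ((q ^ k)⁻¹ * (shP q z k * (z - q ^ k))) := by
    rw [← h4]; ring
  rw [h5]
  field_simp
  ring

lemma sumR_succ {q : ℂ} (hq : q ≠ 0) (x z : ℂ) (n : ℕ) :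
    sumR q x z (n + 1) = q ^ n * (x * (z - 1) * sumR q x (z / q) n - z * sumR q x z n) := by
  -- The second `q`-Pascal rule splits the sum; the second part is reindexed to start at `0`.
  have key : sumR q x z (n + 1)
      = ∑ k ∈ Finset.range (n + 1), q ^ (n - k) * gb q n k * (-1) ^ (k + 1) * tri q (k + 1)
            * z ^ (k + 1) * x ^ (n - k) * shP q z (n - k)
        + ∑ k ∈ Finset.range (n + 1), gb q n k * (-1) ^ k * tri q k
            * z ^ k * x ^ (n + 1 - k) * shP q z (n + 1 - k) := by
    have h2 := Finset.sum_range_succ'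
      (fun k => gb q n k * (-1) ^ k * tri q k
            * z ^ k * x ^ (n + 1 - k) * shP q z (n + 1 - k)) (n + 1)
    rw [Finset.sum_range_succ] at h2
    rw [gb_eq_zero q n (n + 1) (by omega)] at h2
    simp only [zero_mul, add_zero] at h2
    unfold sumR
    rw [h2, Finset.sum_range_succ', ← add_assoc, ← Finset.sum_add_distrib]
    congr 1
    · apply Finset.sum_congr rfl
      intro k hk
      rw [gb_succ' hq n k (by simpa [Nat.lt_succ_iff] using hk), Nat.add_sub_add_right]; ring
    · simp [gb_zero]
  rw [key, ← Finset.sum_add_distrib]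
  unfold sumR
  simp only [Finset.mul_sum]
  rw [← Finset.sum_sub_distrib, Finset.mul_sum]
  apply Finset.sum_congr rfl
  intro k hk
  have hkn : k ≤ n := by simpa [Nat.lt_succ_iff] using hk
  have hn : q ^ n = q ^ (n - k) * q ^ k := by rw [← pow_add]; congr 1; omega
  rw [show n + 1 - k = (n - k) + 1 by omega, shP_succ' hq, tri_succ, hn]
  have hk0 := pow_ne_zero k hq
  rw [div_pow]
  field_simp
  ring

lemma sumL_eq_sumR {q : ℂ} (hq : q ≠ 0) (x : ℂ) (n : ℕ) : ∀ z, sumL q x z n = sumR q x z n := by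
  induction n with
  | zero => intro z; simp [sumL, sumR, gb_zero, tri_zero, shP_zero]
  | succ n ih => intro z; rw [sumL_succ hq, sumR_succ hq, ih, ih]

lemma qp_succ (q a : ℂ) (k : ℕ) : qp q a (k + 1) = qp q a k * (1 - a * q ^ k) :=
  Finset.prod_range_succ _ _

lemma qp_zero (q a : ℂ) : qp q a 0 = 1 := by simp [qp]

lemma qp_inv (q : ℂ) {y : ℂ} (hy : y ≠ 0) (k : ℕ) : qp q (1 / y) k = shP q y k / y ^ k := by
  induction k with
  | zero => simp [qp_zero, shP_zero]
  | succ k ih =>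
    rw [qp_succ, ih, shP_succ]
    field_simp
    ring

lemma qp_neg {q : ℂ} (hq : q ≠ 0) (n k : ℕ) :
    qp q (q ^ (-(n : ℤ))) k = (-1) ^ k * tri q k / q ^ (n * k) * gb q n k * qp q q k := by
  induction k with
  | zero => simp [qp_zero, tri_zero, gb_zero]
  | succ k ih =>
    have h := gb_ratio q n k
    rw [qp_succ, ih, tri_succ, qp_succ, zpow_neg, zpow_natCast, mul_add, mul_one, pow_add]
    have h1 := pow_ne_zero n hq
    have h2 := pow_ne_zero (n * k) hq
    field_simp
    linear_combination (tri q k * qp q q k * q ^ n * q ^ (n * k)) * h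

/-- Reversal of the product `(z q^{1-n};q)_j`: it is, up to a monomial, `P_n(z) / P_{n-j}(z)`. -/
lemma qp_shift {q : ℂ} (hq : q ≠ 0) (z : ℂ) (n j : ℕ) (hj : j ≤ n) :
    qp q (z * q ^ (1 - (n : ℤ))) j * shP q z (n - j) * q ^ (n * j)
      = (-1) ^ j * q ^ j * tri q j * shP q z n := by
  induction j with
  | zero => simp [qp_zero, tri_zero]
  | succ j ih =>
    have h := ih (by omega)
    obtain ⟨m, rfl⟩ : ∃ m, n = m + j + 1 := ⟨n - j - 1, by omega⟩
    rw [show m + j + 1 - j = m + 1 by omega, shP_succ] at h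
    rw [show m + j + 1 - (j + 1) = m by omega, qp_succ, tri_succ]
    have hz : q ^ (1 - ((m + j + 1 : ℕ) : ℤ)) = (q ^ m * q ^ j)⁻¹ := by
      rw [← pow_add, ← zpow_natCast, ← zpow_neg]; congr 1; push_cast; ring
    have hfac : (1 - z * q ^ (1 - ((m + j + 1 : ℕ) : ℤ)) * q ^ j) * q ^ (m + j + 1)
        = -(z - q ^ m) * q ^ (j + 1) := by
      rw [hz]
      have := pow_ne_zero m hq
      have := pow_ne_zero j hq
      field_simp
      ring
    rw [mul_add, mul_one, pow_add q ((m + j + 1) * j)]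
    linear_combination
      (qp q (z * q ^ (1 - ((m + j + 1 : ℕ) : ℤ))) j * shP q z m * q ^ ((m + j + 1) * j)) * hfac
        - q ^ (j + 1) * h

/-- The new connection (6.20) between a terminating ₃φ₀ and a terminating ₁φ₁. -/
theorem stmt14 (q : ℝ) (hq0 : 0 < q) (hq1 : q < 1)
    (n : ℕ) (z δ : ℂ) (hz : z ≠ 0) (hδ : δ ≠ 0)
    (hzq : ∀ k : ℕ, k < n → z ≠ (q : ℂ) ^ k) :
    (-(δ * z)) ^ (-(n : ℤ)) * (q : ℂ) ^ (n * (n - 1) / 2) *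
        ∑ k ∈ Finset.range (n + 1),
          (qp q ((q : ℂ) ^ (-(n : ℤ))) k * qp q (1 / (z * δ)) k * qp q (1 / z) k / qp q q k) *
            (q : ℂ) ^ (-(k * (k - 1) : ℤ)) * (δ * z ^ 2 * (q : ℂ) ^ n) ^ k =
      z ^ n * qp q (1 / z) n *
        ∑ j ∈ Finset.range (n + 1),
          (qp q ((q : ℂ) ^ (-(n : ℤ))) j /
              (qp q (z * (q : ℂ) ^ (1 - (n : ℤ))) j * qp q q j)) *
            (-1) ^ j * (q : ℂ) ^ (j * (j - 1) / 2) * ((q : ℂ) / δ) ^ j := by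
  have hq : (q : ℂ) ≠ 0 := by exact_mod_cast hq0.ne'
  have hQ : ∀ k, qp q q k ≠ 0 := by
    intro k
    refine Finset.prod_ne_zero_iff.mpr fun i _ => ?_
    have h1 : q ^ (i + 1) < 1 := pow_lt_one₀ hq0.le hq1 (by omega)
    have h2 : (1 : ℝ) - q * q ^ i ≠ 0 := by rw [← pow_succ']; linarith
    exact_mod_cast h2
  have hP : shP q z n ≠ 0 :=
    Finset.prod_ne_zero_iff.mpr fun i hi => sub_ne_zero.mpr (hzq i (Finset.mem_range.mp hi))
  have hsq : ∀ k : ℕ, (q : ℂ) ^ (-(k * (k - 1) : ℤ)) = (tri q k ^ 2)⁻¹ := by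
    intro k
    rw [zpow_neg]
    congr 1
    induction k with
    | zero => simp [tri_zero]
    | succ k ih =>
      rw [tri_succ, mul_pow, ← ih, ← pow_mul, ← zpow_natCast, ← zpow_add₀ hq]
      congr 1; push_cast; ring
  have hL : ∀ k ∈ Finset.range (n + 1),
      (qp q ((q : ℂ) ^ (-(n : ℤ))) k * qp q (1 / (z * δ)) k * qp q (1 / z) k / qp q q k) *
            (q : ℂ) ^ (-(k * (k - 1) : ℤ)) * (δ * z ^ 2 * (q : ℂ) ^ n) ^ k
        = (-1) ^ k * gb q n k * (tri q k)⁻¹ * shP q (z * δ) k * shP q z k := by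
    intro k _
    have ht := tri_ne hq k
    have hQk := hQ k
    rw [qp_neg hq, qp_inv _ hz, qp_inv _ (mul_ne_zero hz hδ), hsq, pow_mul]
    simp only [mul_pow, ← pow_mul]
    field_simp
    ring
  have hR : ∀ j ∈ Finset.range (n + 1),
      shP q z n * ((qp q ((q : ℂ) ^ (-(n : ℤ))) j /
              (qp q (z * (q : ℂ) ^ (1 - (n : ℤ))) j * qp q q j)) *
            (-1) ^ j * (q : ℂ) ^ (j * (j - 1) / 2) * ((q : ℂ) / δ) ^ j)
        = (δ * z) ^ (-(n : ℤ)) *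
          (gb q n j * (-1) ^ j * tri q j * z ^ j * (z * δ) ^ (n - j) * shP q z (n - j)) := by
    intro j hj
    have hjn : j ≤ n := by simpa [Nat.lt_succ_iff] using hj
    have hs := qp_shift hq z n j hjn
    have ht := tri_ne hq j
    have hQj := hQ j
    have hne : ((-1) ^ j * (q : ℂ) ^ j * tri q j * shP q z n) ≠ 0 := by
      simp [hq, ht, hP]
    have hD : qp q (z * (q : ℂ) ^ (1 - (n : ℤ))) j ≠ 0 := by
      intro h0; rw [h0] at hs; apply hne; rw [← hs]; ring
    rw [qp_neg hq, zpow_neg, zpow_natCast, ← tri]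
    have hzn : (δ * z) ^ n = (z * δ) ^ (n - j) * z ^ j * δ ^ j := by
      rw [mul_assoc, ← mul_pow, ← pow_add, mul_comm]; congr 1; omega
    rw [hzn, div_pow]
    have hzd : (z * δ) ^ (n - j) ≠ 0 := pow_ne_zero _ (mul_ne_zero hz hδ)
    generalize (z * δ) ^ (n - j) = w at *
    generalize qp q (z * (q : ℂ) ^ (1 - (n : ℤ))) j = D at *
    have hqn := pow_ne_zero (n * j) hq
    generalize (q : ℂ) ^ (n * j) = u at *
    field_simp
    linear_combination (-gb q n j) * hs
  have hmain := sumL_eq_sumR hq (z * δ) n z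
  have hpre : z ^ n * qp q (1 / z) n = shP q z n := by
    rw [qp_inv _ hz]; field_simp
  rw [Finset.sum_congr rfl hL, hpre, Finset.mul_sum (a := shP q z n), Finset.sum_congr rfl hR, ← Finset.mul_sum,
    ← sumR, ← hmain, sumL, ← tri, neg_eq_neg_one_mul, mul_zpow]
  have h1 : ((-1 : ℂ)) ^ (-(n : ℤ)) = (-1) ^ n := by
    rw [zpow_neg, zpow_natCast, ← inv_pow]; norm_num
  rw [h1]
  ring
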